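/- arXiv:1606.08085 — 2 statements merged into one kernel-verified Lean document; each statement's English description precedes it below -/
import Mathlib

section
/- Let A be the adjacency matrix of an undirected circulant graph on N vertices with generating set S, positive weights (d_s)_{s∈S}, degree d per node and bandwidth B. Let ᾱ = (α_1,…,α_T) with β_n = d̃_{α_n}/d, let k ≥ 1 with 2TkB < N, and let H_HP = ∏_{n=1}^T (1/2^k)(β_n I_N − A/d)^k be the HGESWT high-pass filter. Then H_HP annihilates complex exponential polynomial graph signals with exponent ±iα_n: for every m ∈ {1,…,T}, every polynomial p of degree at most k−1, and either sign choice, the graph signal x ∈ ℂ^N with x_j = p(j)·e^{±iα_m j} satisfies (H_HP x)_i = 0 for every index i with TkB ≤ i ≤ N−1−TkB. -/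
/-- The symmetric circulant adjacency matrix of the circulant graph on `N` vertices
with generating set `S` and weights `w`. -/
noncomputable def circAdj (N : ℕ) (S : Finset ℕ) (w : ℕ → ℝ) :
    Matrix (Fin N) (Fin N) ℝ :=
  fun i j => ∑ s ∈ S,
    if ((i : ℤ) - (j : ℤ)) % (N : ℤ) = (s : ℤ) % (N : ℤ) ∨
       ((i : ℤ) - (j : ℤ)) % (N : ℤ) = (-(s : ℤ)) % (N : ℤ)
    then w s else 0

/-!
On the line `ℤ`, shifting the signal `q(t) z ^ t` by `a` multiplies it by `z ^ a` up to a signal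
`r(t) z ^ t` with `deg r < deg q`. Hence the adjacency operator of the line minus the exponential
degree at `z` strictly lowers the degree of the polynomial part: a factor `b - c • adjacency` never
raises that degree, and its `k`-th power kills polynomial parts of degree less than `k` once
`b` is `c` times the exponential degree at `z`.

On `N` vertices the circulant matrix agrees with the line operator away from the border. Each
multiplication by it costs a margin of `B` vertices at either end, so `T` factors of order `k` cost
`T * k * B`.
-/

open Polynomial

section LinearAlgebra

variable {R V : Type*} [CommSemiring R] [AddCommMonoid V] [Module R V]

lemma list_prod_apply_eq_zero_of_mem {L : List (Module.End R V)} {W : Submodule R V}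
    (hW : ∀ g ∈ L, g ∈ W.compatibleMaps W) {f : Module.End R V} (hf : f ∈ L)
    (hfW : f ∈ W.compatibleMaps ⊥) {v : V} (hv : v ∈ W) : L.prod v = 0 := by
  obtain ⟨L₁, L₂, rfl⟩ := List.mem_iff_append.1 hf
  have hL₂ : L₂.prod ∈ W.compatibleMaps W :=
    List.prod_induction (· ∈ W.compatibleMaps W) (fun _ _ hg hh _ hu => hg (hh hu))
      (fun _ hu => hu) fun g hg => hW g (by simp [hg])
  have hfv : f (L₂.prod v) = 0 := hfW (hL₂ hv)
  simp [hfv]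

lemma pow_mem_compatibleMaps {W : ℕ → Submodule R V} {f : Module.End R V}
    (hf : ∀ n, f ∈ (W (n + 1)).compatibleMaps (W n)) (k : ℕ) :
    f ^ k ∈ (W k).compatibleMaps (W 0) := by
  induction k with
  | zero => exact fun _ hv => hv
  | succ k ih => exact fun _ hv => ih (hf k hv)

end LinearAlgebra

section Line

variable {K : Type*} [CommRing K]

variable (K) in
/-- The translation `x ↦ x (· + a)` of signals on the line. -/
def shift (a : ℤ) : Module.End K (ℤ → K) :=
  LinearMap.funLeft K K (· + a)

/-- The adjacency operator of the weighted graph on `ℤ` joining `t` to `t ± s` for `s ∈ S`; the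
circulant graph is its quotient modulo `N`. -/
def lineAdj (S : Finset ℕ) (w : ℕ → K) : Module.End K (ℤ → K) :=
  ∑ s ∈ S, w s • (shift K s + shift K (-s))

lemma lineAdj_apply (S : Finset ℕ) (w : ℕ → K) (y : ℤ → K) (t : ℤ) :
    lineAdj S w y t = ∑ s ∈ S, w s * (y (t + s) + y (t - s)) := by
  simp [lineAdj, shift, LinearMap.funLeft_apply, sub_eq_add_neg, mul_add]

end Line

section ExponentialPolynomials

lemma taylor_sub_self_mem_degreeLT {R : Type*} [Ring R] {n : ℕ} {q : R[X]}
    (hq : q ∈ degreeLT R (n + 1)) (a : R) : taylor a q - q ∈ degreeLT R n := by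
  rcases eq_or_ne q 0 with rfl | hq₀
  · simp
  have hlt : (taylor a q - q).degree < q.degree := by
    simpa using degree_sub_lt_left (degree_taylor q a) (by simpa using hq₀) (by simp)
  rw [mem_degreeLT] at hq ⊢
  exact hlt.trans_le (Order.lt_succ_iff.1 hq)

variable {K : Type*} [Field K]

/-- The exponential polynomial signal `t ↦ q(t) z ^ t` on the line, as a linear function of `q`. -/
noncomputable def expPoly (z : K) : K[X] →ₗ[K] ℤ → K where
  toFun q t := q.eval (t : K) * z ^ t
  map_add' p q := by ext t; simp [add_mul]
  map_smul' c q := by ext t; simp [mul_assoc]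

/-- The space of exponential polynomials with base `z` whose polynomial part has degree less
than `n`. -/
noncomputable def expPolySignals (z : K) (n : ℕ) : Submodule K (ℤ → K) :=
  (degreeLT K n).map (expPoly z)

/-- The exponential degree in terms of the base: the paper's `d̃_α` is its value at
`z = e ^ (iα)`. -/
def expDegree (S : Finset ℕ) (w : ℕ → K) (z : K) : K :=
  ∑ s ∈ S, w s * (z ^ (s : ℤ) + z ^ (-s : ℤ))

lemma expPolySignals_zero (z : K) : expPolySignals z 0 = ⊥ := by
  have hzero : degreeLT K 0 = ⊥ := (Submodule.eq_bot_iff _).2 fun q hq => by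
    simpa [mem_degreeLT] using hq
  rw [expPolySignals, hzero, Submodule.map_bot]

lemma expPolySignals_mono (z : K) : Monotone (expPolySignals z) := fun _ _ h =>
  Submodule.map_mono (degreeLT_mono h)

variable {z : K}

lemma shift_expPoly (hz : z ≠ 0) (a : ℤ) (q : K[X]) :
    shift K a (expPoly z q) = z ^ a • expPoly z (taylor (a : K) q) := by
  ext t
  simp only [shift, expPoly, LinearMap.funLeft_apply, LinearMap.coe_mk, AddHom.coe_mk,
    Pi.smul_apply, smul_eq_mul, taylor_eval, Int.cast_add, zpow_add₀ hz]
  ring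

lemma shift_sub_smul_one_mem_compatibleMaps (hz : z ≠ 0) (a : ℤ) (n : ℕ) :
    shift K a - z ^ a • 1 ∈
      (expPolySignals z (n + 1)).compatibleMaps (expPolySignals z n) := by
  rintro _ ⟨q, hq, rfl⟩
  have hshift : (shift K a - z ^ a • 1) (expPoly z q) =
      z ^ a • expPoly z (taylor (a : K) q - q) := by
    simp [shift_expPoly hz, smul_sub]
  rw [Submodule.mem_comap, hshift]
  exact Submodule.smul_mem _ _ ⟨_, taylor_sub_self_mem_degreeLT hq _, rfl⟩

lemma lineAdj_sub_smul_one_mem_compatibleMaps (hz : z ≠ 0) (S : Finset ℕ) (w : ℕ → K) (n : ℕ) :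
    lineAdj S w - expDegree S w z • 1 ∈
      (expPolySignals z (n + 1)).compatibleMaps (expPolySignals z n) := by
  have hsum : lineAdj S w - expDegree S w z • 1 = ∑ s ∈ S, w s •
      ((shift K s - z ^ (s : ℤ) • 1) + (shift K (-s) - z ^ (-s : ℤ) • 1)) := by
    simp only [lineAdj, expDegree, Finset.sum_smul, ← Finset.sum_sub_distrib]
    refine Finset.sum_congr rfl fun s _ => ?_
    module
  rw [hsum]
  exact sum_mem fun s _ => Submodule.smul_mem _ _ <| add_mem
    (shift_sub_smul_one_mem_compatibleMaps hz _ n) (shift_sub_smul_one_mem_compatibleMaps hz _ n)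

lemma lineAdj_mem_compatibleMaps (hz : z ≠ 0) (S : Finset ℕ) (w : ℕ → K) (n : ℕ) :
    lineAdj S w ∈ (expPolySignals z n).compatibleMaps (expPolySignals z n) := fun y hy => by
  have hlow : (lineAdj S w - expDegree S w z • 1) y ∈ expPolySignals z n :=
    lineAdj_sub_smul_one_mem_compatibleMaps hz S w n (expPolySignals_mono z n.le_succ hy)
  simpa using add_mem hlow (Submodule.smul_mem _ (expDegree S w z) hy)

lemma highpass_mem_compatibleMaps (hz : z ≠ 0) (S : Finset ℕ) (w : ℕ → K) (b c : K) (k n : ℕ) :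
    (b • 1 - c • lineAdj S w) ^ k ∈
      (expPolySignals z n).compatibleMaps (expPolySignals z n) := by
  have hone : (1 : Module.End K (ℤ → K)) ∈
      (expPolySignals z n).compatibleMaps (expPolySignals z n) := fun _ hy => hy
  exact pow_mem_compatibleMaps (W := fun _ => expPolySignals z n) (fun _ =>
    sub_mem (Submodule.smul_mem _ b hone)
      (Submodule.smul_mem _ c (lineAdj_mem_compatibleMaps hz S w n))) k

lemma highpass_mem_compatibleMaps_bot (hz : z ≠ 0) (S : Finset ℕ) (w : ℕ → K) (c : K) (k : ℕ) :
    ((c * expDegree S w z) • 1 - c • lineAdj S w) ^ k ∈ (expPolySignals z k).compatibleMaps ⊥ := by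
  have hfactor : (c * expDegree S w z) • 1 - c • lineAdj S w =
      -c • (lineAdj S w - expDegree S w z • 1) := by module
  rw [← expPolySignals_zero z, hfactor]
  exact pow_mem_compatibleMaps (fun n => Submodule.smul_mem _ _
    (lineAdj_sub_smul_one_mem_compatibleMaps hz S w n)) k

lemma list_prod_highpass_apply_eq_zero (hz : z ≠ 0) (S : Finset ℕ) (w : ℕ → K) {ι : Type*}
    {L : List ι} (a b c : ι → K) (k : ℕ) {m : ι} (hm : m ∈ L)
    (hb : b m = c m * expDegree S w z) {y : ℤ → K} (hy : y ∈ expPolySignals z k) :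
    (L.map fun n => a n • (b n • 1 - c n • lineAdj S w) ^ k).prod y = 0 := by
  refine list_prod_apply_eq_zero_of_mem (List.forall_mem_map.2 fun n _ => ?_)
    (List.mem_map_of_mem hm) ?_ hy
  · exact Submodule.smul_mem _ (a n) (highpass_mem_compatibleMaps hz S w (b n) (c n) k k)
  · rw [hb]
    exact Submodule.smul_mem _ (a m) (highpass_mem_compatibleMaps_bot hz S w (c m) k)

end ExponentialPolynomials

section Interior

variable {K : Type*} [CommRing K] {N : ℕ}

/-- The finite signal `x` agrees with the line signal `y` at all vertices at distance at least `r`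
from both ends. -/
def AgreesInside (r : ℕ) (x : Fin N → K) (y : ℤ → K) : Prop :=
  ∀ i : Fin N, r ≤ (i : ℕ) → (i : ℕ) + r < N → x i = y i

lemma AgreesInside.sum_ite_eq {r : ℕ} {x : Fin N → K} {y : ℤ → K} (h : AgreesInside r x y) {t : ℤ}
    (ht : r ≤ t) (ht' : t + r < N) : ∑ j : Fin N, (if (j : ℤ) = t then x j else 0) = y t := by
  lift t to ℕ using by omega
  have hne : ∀ j : Fin N, j ≠ ⟨t, by omega⟩ → (j : ℤ) ≠ t := fun j hj => by
    simpa [Fin.ext_iff] using hj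
  rw [Finset.sum_eq_single _ (fun j _ hj => if_neg (hne j hj)) (by simp), if_pos rfl]
  exact h ⟨t, _⟩ (by exact_mod_cast ht) (by exact_mod_cast ht')

/-- The matrix `M` acts like the line operator `Φ` away from the border, at the cost of widening
the border by `r` vertices. -/
def ActsInsideAs (r : ℕ) (M : Matrix (Fin N) (Fin N) K) (Φ : Module.End K (ℤ → K)) : Prop :=
  ∀ ⦃r₀ : ℕ⦄ ⦃x : Fin N → K⦄ ⦃y : ℤ → K⦄,
    AgreesInside r₀ x y → AgreesInside (r₀ + r) (M.mulVec x) (Φ y)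

namespace ActsInsideAs

variable {r r' : ℕ} {M M' : Matrix (Fin N) (Fin N) K} {Φ Φ' : Module.End K (ℤ → K)}

lemma one (r : ℕ) : ActsInsideAs r (1 : Matrix (Fin N) (Fin N) K) 1 := fun r₀ x y h i hi hi' => by
  simpa using h i (by omega) (by omega)

lemma smul (h : ActsInsideAs r M Φ) (c : K) : ActsInsideAs r (c • M) (c • Φ) :=
  fun r₀ x y hxy i hi hi' => by simp [Matrix.smul_mulVec, h hxy i hi hi']

lemma sub (h : ActsInsideAs r M Φ) (h' : ActsInsideAs r M' Φ') :
    ActsInsideAs r (M - M') (Φ - Φ') :=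
  fun r₀ x y hxy i hi hi' => by simp [Matrix.sub_mulVec, h hxy i hi hi', h' hxy i hi hi']

lemma mul (h : ActsInsideAs r M Φ) (h' : ActsInsideAs r' M' Φ') :
    ActsInsideAs (r' + r) (M * M') (Φ * Φ') := fun r₀ x y hxy => by
  rw [← Matrix.mulVec_mulVec, ← add_assoc]
  exact h (h' hxy)

lemma pow (h : ActsInsideAs r M Φ) (k : ℕ) : ActsInsideAs (k * r) (M ^ k) (Φ ^ k) := by
  induction k with
  | zero => simpa using one 0
  | succ k ih => simpa only [pow_succ', Nat.succ_mul] using h.mul ih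

lemma list_prod {ι : Type*} {M : ι → Matrix (Fin N) (Fin N) K} {Φ : ι → Module.End K (ℤ → K)}
    (h : ∀ n, ActsInsideAs r (M n) (Φ n)) (L : List ι) :
    ActsInsideAs (L.length * r) (L.map M).prod (L.map Φ).prod := by
  induction L with
  | nil => simpa using one 0
  | cons n L ih =>
    simpa only [List.map_cons, List.prod_cons, List.length_cons, Nat.succ_mul] using (h n).mul ih

end ActsInsideAs

lemma emod_eq_emod_iff_of_abs_sub_lt {a b n : ℤ} (h : |a - b| < n) : a % n = b % n ↔ a = b := by
  refine ⟨fun hab => ?_, fun hab => hab ▸ rfl⟩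
  exact sub_eq_zero.1 (Int.eq_zero_of_abs_lt_dvd (Int.ModEq.symm hab).dvd h)

lemma circAdj_apply_of_interior {S : Finset ℕ} (w : ℕ → ℝ) {i : Fin N}
    (hS : ∀ s ∈ S, 1 ≤ s ∧ s ≤ (i : ℕ) ∧ (i : ℕ) + s < N) (j : Fin N) :
    circAdj N S w i j = ∑ s ∈ S,
      ((if (j : ℤ) = i + s then w s else 0) + if (j : ℤ) = i - s then w s else 0) := by
  refine Finset.sum_congr rfl fun s hs => ?_
  obtain ⟨hpos, hlow, hhigh⟩ := hS s hs
  have hplus : ((i : ℤ) - j) % N = (-s) % N ↔ (i : ℤ) - j = -s :=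
    emod_eq_emod_iff_of_abs_sub_lt (by rw [abs_lt]; omega)
  have hminus : ((i : ℤ) - j) % N = s % N ↔ (i : ℤ) - j = s :=
    emod_eq_emod_iff_of_abs_sub_lt (by rw [abs_lt]; omega)
  simp only [hplus, hminus]
  split_ifs <;> first | omega | simp

lemma circAdj_actsInsideAs_lineAdj {S : Finset ℕ} {B : ℕ} (hS : ∀ s ∈ S, 1 ≤ s ∧ s ≤ B)
    (w : ℕ → ℝ) :
    ActsInsideAs B ((circAdj N S w).map Complex.ofReal) (lineAdj S fun s => (w s : ℂ)) := by
  intro r x y hxy i hi hi'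
  have hinterior : ∀ s ∈ S, 1 ≤ s ∧ s ≤ (i : ℕ) ∧ (i : ℕ) + s < N := fun s hs => by
    have := hS s hs
    omega
  rw [lineAdj_apply]
  simp only [Matrix.mulVec, dotProduct, Matrix.map_apply, circAdj_apply_of_interior w hinterior,
    Complex.ofReal_sum, Finset.sum_mul]
  rw [Finset.sum_comm]
  refine Finset.sum_congr rfl fun s hs => ?_
  obtain ⟨-, hsB⟩ := hS s hs
  rw [← hxy.sum_ite_eq (t := i + s) (by omega) (by omega),
    ← hxy.sum_ite_eq (t := i - s) (by omega) (by omega),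
    ← Finset.sum_add_distrib, Finset.mul_sum]
  refine Finset.sum_congr rfl fun j _ => ?_
  split_ifs <;> simp [mul_add, add_mul]

end Interior

lemma expDegree_exp_I_mul (S : Finset ℕ) (w : ℕ → ℂ) (θ : ℂ) :
    expDegree S w (Complex.exp (Complex.I * θ)) = ∑ s ∈ S, 2 * w s * Complex.cos (θ * s) := by
  refine Finset.sum_congr rfl fun s _ => ?_
  rw [← Complex.exp_int_mul, ← Complex.exp_int_mul]
  push_cast [Complex.cos]
  ring_nf

/-- The paper's filter has `a n = 1 / 2 ^ k`, `b n = β n` and `c n = 1 / d`. -/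
theorem hgeswt_highpass_annihilates_exponential_polynomials_general
    {N : ℕ} {S : Finset ℕ} {B : ℕ} (hS : ∀ s ∈ S, 1 ≤ s ∧ s ≤ B) (w : ℕ → ℝ)
    {ι : Type*} (L : List ι) (a b c : ι → ℂ) (k : ℕ) (θ : ℂ) {m : ι} (hm : m ∈ L)
    (hb : b m = c m * ∑ s ∈ S, 2 * (w s : ℂ) * Complex.cos (θ * s))
    {p : ℂ[X]} (hp : p.degree < k) {x : Fin N → ℂ}
    (hx : ∀ j : Fin N, x j = p.eval ((j : ℕ) : ℂ) * Complex.exp (Complex.I * (θ * (j : ℕ))))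
    {i : Fin N} (hi : L.length * k * B ≤ i) (hi' : i + L.length * k * B < N) :
    (L.map fun n => a n • (b n • (1 : Matrix (Fin N) (Fin N) ℂ)
      - c n • (circAdj N S w).map Complex.ofReal) ^ k).prod.mulVec x i = 0 := by
  rw [← expDegree_exp_I_mul S (fun s => (w s : ℂ))] at hb
  let z := Complex.exp (Complex.I * θ)
  have hz : z ≠ 0 := Complex.exp_ne_zero _
  have hagrees : AgreesInside 0 x (expPoly z p) := fun j _ _ => by
    have hexp : Complex.exp (Complex.I * (θ * (j : ℕ))) = z ^ (j : ℕ) := by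
      rw [← Complex.exp_nat_mul]
      ring_nf
    simp [hx, hexp, expPoly]
  have hfactor : ∀ n, ActsInsideAs B (b n • 1 - c n • (circAdj N S w).map Complex.ofReal)
      (b n • 1 - c n • lineAdj S fun s => (w s : ℂ)) := fun n =>
    ((ActsInsideAs.one B).smul (b n)).sub ((circAdj_actsInsideAs_lineAdj hS w).smul (c n))
  have hacts := ActsInsideAs.list_prod (fun n => ((hfactor n).pow k).smul (a n)) L
  rw [hacts hagrees i (by rwa [zero_add, ← mul_assoc]) (by rwa [zero_add, ← mul_assoc]),
    list_prod_highpass_apply_eq_zero hz S _ a b c k hm hb ⟨p, mem_degreeLT.2 hp, rfl⟩,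
    Pi.zero_apply]

/-- the HGESWT high-pass filter annihilates complex exponential polynomial
graph signals `x j = p(j)·e^{±iα_m j}` with `deg p ≤ k−1`, up to a border effect of size
`TkB`. -/
theorem hgeswt_highpass_annihilates_exponential_polynomials
    (N : ℕ) (S : Finset ℕ) (w : ℕ → ℝ)
    (hS : ∀ s ∈ S, 1 ≤ s ∧ 2 * s ≤ N - 1)
    (hw : ∀ s ∈ S, 0 < w s) (hSne : S.Nonempty)
    (B : ℕ) (hBS : B ∈ S) (hBmax : ∀ s ∈ S, s ≤ B)
    (T : ℕ) (α : Fin T → ℝ)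
    (β : Fin T → ℝ)
    (hβ : ∀ n : Fin T, β n =
      (∑ s ∈ S, 2 * w s * Real.cos (α n * s)) / (∑ s ∈ S, 2 * w s))
    (k : ℕ) (hk : 1 ≤ k) (hTkB : 2 * (T * k * B) < N)
    (A : Matrix (Fin N) (Fin N) ℝ) (hA : A = circAdj N S w)
    (H : Matrix (Fin N) (Fin N) ℂ)
    (hH : H = ((List.finRange T).map (fun n =>
      (1 / 2 ^ k : ℂ) • (((β n : ℝ) : ℂ) • (1 : Matrix (Fin N) (Fin N) ℂ)
        - (((∑ s ∈ S, 2 * w s : ℝ) : ℂ))⁻¹ • A.map Complex.ofReal) ^ k)).prod)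
    (m : Fin T) (p : Polynomial ℂ) (hp : p.natDegree ≤ k - 1)
    (ε : ℝ) (hε : ε = 1 ∨ ε = -1)
    (x : Fin N → ℂ)
    (hx : ∀ j : Fin N, x j = p.eval ((j : ℕ) : ℂ) *
      Complex.exp (Complex.I * ((ε * α m * (j : ℕ) : ℝ) : ℂ)))
    (i : Fin N) (hi1 : T * k * B ≤ (i : ℕ)) (hi2 : (i : ℕ) ≤ N - 1 - T * k * B) :
    H.mulVec x i = 0 := by
  subst hA hH
  have hdeg : p.degree < k := degree_le_natDegree.trans_lt (by exact_mod_cast (by omega))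
  refine hgeswt_highpass_annihilates_exponential_polynomials_general
    (fun s hs => ⟨(hS s hs).1, hBmax s hs⟩) w (List.finRange T) _ (fun n => (β n : ℂ)) _ k
    (ε * α m) (List.mem_finRange m) ?_ hdeg (by simpa using hx) (by simpa using hi1)
    (by rw [List.length_finRange]; omega)
  rcases hε with rfl | rfl <;> simp [hβ m, div_eq_inv_mul]
end

section
/- Let A be the adjacency matrix of an undirected bipartite circulant graph on N vertices (N even, every element of S odd) with degree d per node, let W be the HGESWT filterbank matrix with parameters β_1,…,β_T, order k, and the alternating downsampling pattern K (K_{ii} = +1 for even i, K_{ii} = −1 for odd i). Then the set of eigenvalues of Wᵀ W equals the image of the set of eigenvalues of A/d under the map γ ↦ λ(γ) = (1/2)·( ∏_{n=1}^T (β_n+γ)^{2k}/2^{2k} + ∏_{n=1}^T (β_n−γ)^{2k}/2^{2k} ). In particular, if λ_min = min_γ λ(γ) > 0, the ℓ2 condition number of W equals C = √(λ_max/λ_min), where λ_max = max_γ λ(γ). -/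
open Polynomial

/-!
Adjacency in a bipartite graph reverses colours, so the sign matrix `K` of the colouring
anticommutes with `B = A/d` and intertwines `p(B)` with `p(-B)` for every polynomial `p`. The
high-pass filter is the low-pass filter `p` evaluated at `-B`. Expanding `Wᵀ W` with the
complementary projections `(1 ± K)/2` leaves `(p(B)² + p(-B)²)/2` plus the cross terms
`(p(B) K p(B) - p(-B) K p(-B))/2`, which cancel by the intertwining. So `Wᵀ W` is a polynomial in
`B`, and the spectral mapping theorem gives its spectrum. The condition number is the ratio of the
extreme singular values of `W`.
-/

section CStarNorm

variable {A : Type*} [NormedRing A] [StarRing A] [CStarRing A] [NormedAlgebra ℝ A]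
  [PartialOrder A] [StarOrderedRing A] [NonnegSpectrumClass ℝ A]
  [IsometricContinuousFunctionalCalculus ℝ A IsSelfAdjoint]

theorem norm_eq_sqrt_of_isGreatest_spectrum {a : A} {c : ℝ}
    (hc : IsGreatest (spectrum ℝ (star a * a)) c) : ‖a‖ = √c := by
  have : Nontrivial A := by
    by_contra! h
    simpa using hc.1
  have hnorm : (‖·‖) '' spectrum ℝ (star a * a) = spectrum ℝ (star a * a) := by
    rw [Set.image_congr fun x hx =>
      Real.norm_of_nonneg (spectrum_nonneg_of_nonneg (star_mul_self_nonneg a) hx), Set.image_id']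
  have hgreatest : IsGreatest (spectrum ℝ (star a * a)) ‖star a * a‖ :=
    hnorm ▸ IsometricContinuousFunctionalCalculus.isGreatest_norm_spectrum _
  rw [hc.unique hgreatest, CStarRing.norm_star_mul_self, Real.sqrt_mul_self (norm_nonneg a)]

theorem norm_mul_norm_inv_eq_sqrt (u : Aˣ) {m M : ℝ}
    (hm : IsLeast (spectrum ℝ (star (u : A) * u)) m)
    (hM : IsGreatest (spectrum ℝ (star (u : A) * u)) M) (hpos : 0 < m) :
    ‖(u : A)‖ * ‖(↑u⁻¹ : A)‖ = √(M / m) := by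
  -- Passing to `star u⁻¹` keeps the norm and makes the Gram element the inverse of `star u * u`.
  have hspec : spectrum ℝ (star (star (↑u⁻¹ : A)) * star (↑u⁻¹ : A)) =
      (spectrum ℝ (star (u : A) * u))⁻¹ := by
    rw [star_star, ← Units.coe_star, ← Units.coe_star, ← Units.val_mul, ← Units.val_mul,
      spectrum.map_inv, mul_inv_rev, star_inv]
  have hinv : IsGreatest (spectrum ℝ (star (star (↑u⁻¹ : A)) * star (↑u⁻¹ : A))) m⁻¹ := by
    rw [hspec]
    exact ⟨by simpa using hm.1, fun y hy => by simpa using inv_anti₀ hpos (hm.2 hy)⟩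
  rw [norm_eq_sqrt_of_isGreatest_spectrum hM, ← norm_star (↑u⁻¹ : A),
    norm_eq_sqrt_of_isGreatest_spectrum hinv, ← Real.sqrt_mul' _ (inv_nonneg.2 hpos.le),
    div_eq_mul_inv]

end CStarNorm

section MatrixNorm

open scoped Matrix Matrix.Norms.L2Operator MatrixOrder

theorem norm_toEuclideanCLM_mul_norm_inv_eq_sqrt {𝕜 V : Type*} [RCLike 𝕜] [Fintype V]
    [DecidableEq V] {W : Matrix V V 𝕜} {m M : ℝ} (hm : IsLeast (spectrum ℝ (Wᴴ * W)) m)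
    (hM : IsGreatest (spectrum ℝ (Wᴴ * W)) M) (hpos : 0 < m) :
    ‖Matrix.toEuclideanCLM (𝕜 := 𝕜) W‖ * ‖Matrix.toEuclideanCLM (𝕜 := 𝕜) W⁻¹‖ = √(M / m) := by
  let : NormedAlgebra ℝ (Matrix V V 𝕜) :=
    { norm_smul_le := fun r X => by
        rw [RCLike.real_smul_eq_coe_smul (K := 𝕜) r X, norm_smul, RCLike.norm_ofReal,
          Real.norm_eq_abs] }
  have hunit : IsUnit (Wᴴ * W) :=
    spectrum.isUnit_of_zero_notMem ℝ fun h => (hm.2 h).not_gt hpos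
  obtain ⟨u, rfl⟩ := isUnit_of_mul_isUnit_right hunit
  rw [← Matrix.coe_units_inv]
  exact norm_mul_norm_inv_eq_sqrt u hm hM hpos

end MatrixNorm

section PolynomialCalculus

variable {R A : Type*} [CommSemiring R] [Semiring A] [Algebra R A]

theorem semiconjBy_aeval {a x y : A} (h : SemiconjBy a x y) (p : R[X]) :
    SemiconjBy a (aeval x p) (aeval y p) := by
  induction p using Polynomial.induction_on' with
  | add p q hp hq => simpa only [map_add] using hp.add_right hq
  | monomial n r =>
    simpa only [aeval_monomial, ← Algebra.smul_def] using (h.pow_right n).smul_right r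

theorem isSelfAdjoint_aeval [StarRing R] [TrivialStar R] [StarRing A] [StarModule R A] {a : A}
    (ha : IsSelfAdjoint a) (p : R[X]) : IsSelfAdjoint (aeval a p) := by
  induction p using Polynomial.induction_on' with
  | add p q hp hq => simpa only [map_add] using hp.add hq
  | monomial n r =>
    simpa only [aeval_monomial, ← Algebra.smul_def] using (IsSelfAdjoint.all r).smul (ha.pow n)

end PolynomialCalculus

section Filterbank

/-- The one-level filterbank which applies `P` on the samples kept by the downsampling pattern `K`
(where `K = 1`) and `Q` on the discarded ones (where `K = -1`). -/
noncomputable def filterbank {A : Type*} [Ring A] [Algebra ℝ A] (K P Q : A) : A :=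
  (1 / 2 : ℝ) • ((1 + K) * P) + (1 / 2 : ℝ) • ((1 - K) * Q)

theorem star_mul_self_of_isStarProjection {A : Type*} [Ring A] [StarRing A] {e : A}
    (he : IsStarProjection e) (P Q : A) :
    star (e * P + (1 - e) * Q) * (e * P + (1 - e) * Q) =
      star P * (e * P) + star Q * ((1 - e) * Q) := by
  have hstar : star (e * P + (1 - e) * Q) = star P * e + star Q * (1 - e) := by
    simp only [star_add, star_mul, he.isSelfAdjoint.star_eq, he.one_sub.isSelfAdjoint.star_eq]
  calc
    _ = star P * (e * e * P) + star P * (e * (1 - e) * Q) + star Q * ((1 - e) * e * P) +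
        star Q * ((1 - e) * (1 - e) * Q) := by
      rw [hstar]
      noncomm_ring
    _ = _ := by
      simp only [he.isIdempotentElem.eq, he.one_sub.isIdempotentElem.eq, he.mul_one_sub_self,
        he.one_sub_mul_self, zero_mul, mul_zero, add_zero]

variable {A : Type*} [Ring A] [StarRing A] [Algebra ℝ A] [StarModule ℝ A] {K : A}

theorem isStarProjection_half_smul_one_add (hK : IsSelfAdjoint K) (hKK : K * K = 1) :
    IsStarProjection ((1 / 2 : ℝ) • (1 + K)) where
  isIdempotentElem := by
    have hsq : (1 + K) * (1 + K) = (2 : ℝ) • (1 + K) := by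
      rw [add_mul, one_mul, mul_add, mul_one, hKK, two_smul, add_comm K]
    rw [IsIdempotentElem, smul_mul_smul_comm, hsq, smul_smul]
    norm_num
  isSelfAdjoint := (IsSelfAdjoint.all _).smul ((IsSelfAdjoint.one A).add hK)

theorem star_filterbank_mul_self (hK : IsSelfAdjoint K) (hKK : K * K = 1) {P Q : A}
    (hP : IsSelfAdjoint P) (hQ : IsSelfAdjoint Q) (hPQ : Commute P Q) (hKP : SemiconjBy K P Q) :
    star (filterbank K P Q) * filterbank K P Q = (1 / 2 : ℝ) • (P ^ 2 + Q ^ 2) := by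
  have hKQ : K * Q = P * K :=
    calc K * Q = K * (Q * K) * K := by rw [mul_assoc, mul_assoc, hKK, mul_one]
      _ = P * K := by rw [← hKP.eq, ← mul_assoc, hKK, one_mul]
  have hcross : P * (K * P) = Q * (K * Q) := by
    rw [hKP.eq, hKQ, ← mul_assoc, ← mul_assoc, hPQ.eq]
  have hcompl : 1 - (1 / 2 : ℝ) • (1 + K) = (1 / 2 : ℝ) • (1 - K) := by module
  have hgram := star_mul_self_of_isStarProjection (isStarProjection_half_smul_one_add hK hKK) P Q
  simp only [hcompl, smul_mul_assoc] at hgram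
  rw [filterbank, hgram, hP.star_eq, hQ.star_eq]
  simp only [mul_smul_comm, add_mul, sub_mul, one_mul, mul_add, mul_sub, hcross, sq]
  module

theorem star_filterbank_aeval_mul_self (hK : IsSelfAdjoint K) (hKK : K * K = 1) {B : A}
    (hB : IsSelfAdjoint B) (hKB : SemiconjBy K B (-B)) (p : ℝ[X]) :
    star (filterbank K (aeval B p) (aeval (-B) p)) * filterbank K (aeval B p) (aeval (-B) p) =
      aeval B ((1 / 2 : ℝ) • (p ^ 2 + p.comp (-X) ^ 2)) := by
  have hneg : aeval (-B) p = aeval B (p.comp (-X)) := by simp [aeval_comp]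
  have hcomm : Commute (aeval B p) (aeval (-B) p) := by
    rw [hneg]
    exact (Commute.all p _).map (aeval B)
  rw [star_filterbank_mul_self hK hKK (isSelfAdjoint_aeval hB p) (isSelfAdjoint_aeval hB.neg p)
    hcomm (semiconjBy_aeval hKB p), hneg, map_smul, map_add, map_pow, map_pow]

theorem spectrum_star_filterbank_aeval_mul_self [TopologicalSpace A]
    [ContinuousFunctionalCalculus ℝ A IsSelfAdjoint] (hK : IsSelfAdjoint K) (hKK : K * K = 1)
    {B : A} (hB : IsSelfAdjoint B) (hKB : SemiconjBy K B (-B)) (p : ℝ[X]) :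
    spectrum ℝ (star (filterbank K (aeval B p) (aeval (-B) p)) *
        filterbank K (aeval B p) (aeval (-B) p)) =
      (fun γ => 1 / 2 * (p.eval γ ^ 2 + p.eval (-γ) ^ 2)) '' spectrum ℝ B := by
  rw [star_filterbank_aeval_mul_self hK hKK hB hKB, ← cfc_polynomial _ B hB,
    cfc_map_spectrum _ B hB]
  simp [mul_add]

end Filterbank

section HGESWT

variable {T : ℕ} (β : Fin T → ℝ) (k : ℕ)

/-- The HGESWT low-pass filter with parameters `β` and order `k` of a normalised adjacency matrix
`B`; the high-pass filter is the one of `-B`. It is defined in an arbitrary algebra so that it also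
applies to polynomials and to real numbers. -/
noncomputable def hgeswtFilter {A : Type*} [Ring A] [Algebra ℝ A] (B : A) : A :=
  ((List.finRange T).map fun n => (1 / 2 ^ k : ℝ) • (β n • (1 : A) + B) ^ k).prod

/-- The squared gain `λ(γ)` of the HGESWT filterbank at the graph frequency `γ`. -/
noncomputable def hgeswtPowerResponse (γ : ℝ) : ℝ :=
  (1 / 2) * (∏ n : Fin T, (β n + γ) ^ (2 * k) / 2 ^ (2 * k) +
    ∏ n : Fin T, (β n - γ) ^ (2 * k) / 2 ^ (2 * k))

theorem map_hgeswtFilter {A B : Type*} [Ring A] [Algebra ℝ A] [Ring B] [Algebra ℝ B]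
    (f : A →ₐ[ℝ] B) (a : A) : f (hgeswtFilter β k a) = hgeswtFilter β k (f a) := by
  simp [hgeswtFilter, map_list_prod, Function.comp_def]

theorem aeval_hgeswtFilter_X {A : Type*} [Ring A] [Algebra ℝ A] (a : A) :
    aeval a (hgeswtFilter β k (X : ℝ[X])) = hgeswtFilter β k a := by
  rw [map_hgeswtFilter, aeval_X]

theorem hgeswtFilter_sq (γ : ℝ) :
    hgeswtFilter β k γ ^ 2 = ∏ n, (β n + γ) ^ (2 * k) / 2 ^ (2 * k) := by
  rw [hgeswtFilter, ← List.ofFn_eq_map, List.prod_ofFn, ← Finset.prod_pow]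
  refine Finset.prod_congr rfl fun n _ => ?_
  rw [smul_eq_mul, smul_eq_mul, mul_one, mul_pow]
  ring

theorem hgeswtPowerResponse_eq (γ : ℝ) :
    hgeswtPowerResponse β k γ =
      1 / 2 * (hgeswtFilter β k γ ^ 2 + hgeswtFilter β k (-γ) ^ 2) := by
  simp only [hgeswtPowerResponse, hgeswtFilter_sq, sub_eq_add_neg]

open scoped Matrix in
theorem hgeswt_bipartite_condition_number_general {𝕜 V : Type*} [RCLike 𝕜] [Fintype V]
    [DecidableEq V] {K B W : Matrix V V 𝕜} (hK : K.IsHermitian) (hKK : K * K = 1)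
    (hB : B.IsHermitian) (hKB : SemiconjBy K B (-B))
    (hW : W = filterbank K (hgeswtFilter β k B) (hgeswtFilter β k (-B))) :
    spectrum ℝ (Wᴴ * W) = hgeswtPowerResponse β k '' spectrum ℝ B ∧
    ∀ lmin lmax : ℝ,
      IsLeast (hgeswtPowerResponse β k '' spectrum ℝ B) lmin →
      IsGreatest (hgeswtPowerResponse β k '' spectrum ℝ B) lmax →
      0 < lmin →
      ‖Matrix.toEuclideanCLM (𝕜 := 𝕜) W‖ * ‖Matrix.toEuclideanCLM (𝕜 := 𝕜) W⁻¹‖ =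
        √(lmax / lmin) := by
  have hspec : spectrum ℝ (Wᴴ * W) = hgeswtPowerResponse β k '' spectrum ℝ B := by
    have h := spectrum_star_filterbank_aeval_mul_self hK.isSelfAdjoint hKK hB.isSelfAdjoint hKB
      (hgeswtFilter β k X)
    simp only [← coe_aeval_eq_eval, aeval_hgeswtFilter_X, ← hgeswtPowerResponse_eq, ← hW] at h
    exact h
  refine ⟨hspec, fun lmin lmax hmin hmax hpos => ?_⟩
  rw [← hspec] at hmin hmax
  exact norm_toEuclideanCLM_mul_norm_inv_eq_sqrt hmin hmax hpos

end HGESWT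

section Downsampling

/-- The downsampling pattern that keeps the vertices satisfying `p`, encoded as a diagonal matrix
with entry `1` at the kept and `-1` at the discarded vertices. -/
def downsamplingPattern (R : Type*) [Ring R] {V : Type*} [DecidableEq V] (p : V → Prop)
    [DecidablePred p] : Matrix V V R :=
  Matrix.diagonal fun i => if p i then 1 else -1

variable {R V : Type*} [Ring R] [DecidableEq V] {p : V → Prop} [DecidablePred p]

theorem downsamplingPattern_isHermitian [StarRing R] : (downsamplingPattern R p).IsHermitian :=
  Matrix.isHermitian_diagonal_iff.2 fun i => by
    split_ifs
    exacts [.one R, (IsSelfAdjoint.one R).neg]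

variable [Fintype V]

theorem downsamplingPattern_mul_self :
    downsamplingPattern R p * downsamplingPattern R p = 1 := by
  rw [downsamplingPattern, Matrix.diagonal_mul_diagonal, ← Matrix.diagonal_one]
  congr! 2 with i
  split_ifs <;> simp

theorem semiconjBy_downsamplingPattern_neg {M : Matrix V V R}
    (hM : ∀ i j, (p i ↔ p j) → M i j = 0) : SemiconjBy (downsamplingPattern R p) M (-M) := by
  ext i j
  rw [downsamplingPattern, Matrix.diagonal_mul, Matrix.mul_diagonal, Matrix.neg_apply]
  by_cases hij : p i ↔ p j
  · simp [hM i j hij]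
  · by_cases hi : p i <;> by_cases hj : p j <;> simp_all

end Downsampling

section CirculantGraph

theorem circAdj_isSymm (N : ℕ) (S : Finset ℕ) (w : ℕ → ℝ) : (circAdj N S w).IsSymm := by
  ext i j
  have hswap (t : ℤ) : ((j : ℤ) - i) % N = t % N ↔ ((i : ℤ) - j) % N = -t % N := by
    rw [← neg_sub (j : ℤ) i]
    exact Int.neg_modEq_neg.symm
  refine Finset.sum_congr rfl fun s _ => if_congr ?_ rfl rfl
  rw [hswap, hswap, neg_neg, or_comm]

theorem circAdj_eq_zero_of_even_iff {N : ℕ} (hN : Even N) {S : Finset ℕ} (w : ℕ → ℝ)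
    (hodd : ∀ s ∈ S, Odd s) {i j : Fin N} (hij : Even (i : ℕ) ↔ Even (j : ℕ)) :
    circAdj N S w i j = 0 := by
  have hsub : Even ((i : ℤ) - j) := by
    rwa [Int.even_sub, Int.even_coe_nat, Int.even_coe_nat]
  have hne {t : ℤ} (ht : Odd t) : ((i : ℤ) - j) % N ≠ t % N := fun h => by
    have hdvd : (2 : ℤ) ∣ t - ((i : ℤ) - j) :=
      (Int.natCast_dvd_natCast.2 hN.two_dvd).trans (Int.ModEq.dvd h)
    exact Int.not_even_iff_odd.2 ht ((Int.even_sub.1 (even_iff_two_dvd.2 hdvd)).2 hsub)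
  refine Finset.sum_eq_zero fun s hs => if_neg ?_
  have hs' : Odd (s : ℤ) := (Int.odd_coe_nat s).2 (hodd s hs)
  exact not_or.2 ⟨hne hs', hne hs'.neg⟩

theorem semiconjBy_downsamplingPattern_circAdj {N : ℕ} (hN : Even N) {S : Finset ℕ} (w : ℕ → ℝ)
    (hodd : ∀ s ∈ S, Odd s) :
    SemiconjBy (downsamplingPattern ℝ fun i : Fin N => Even (i : ℕ)) (circAdj N S w)
      (-circAdj N S w) :=
  semiconjBy_downsamplingPattern_neg fun _ _ => circAdj_eq_zero_of_even_iff hN w hodd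

end CirculantGraph

/-- for a bipartite circulant graph with alternating downsampling, the
eigenvalues of `Wᵀ W` are the image of the eigenvalues of `A/d` under
`γ ↦ (1/2)(∏_n (β_n+γ)^{2k}/2^{2k} + ∏_n (β_n−γ)^{2k}/2^{2k})`; in particular if
`λ_min > 0` the ℓ2 condition number of `W` equals `√(λ_max/λ_min)`. -/
theorem hgeswt_bipartite_condition_number
    (N : ℕ) (hNe : Even N) (S : Finset ℕ) (w : ℕ → ℝ)
    (hS : ∀ s ∈ S, 1 ≤ s ∧ 2 * s ≤ N - 1)
    (hw : ∀ s ∈ S, 0 < w s)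
    (hodd : ∀ s ∈ S, Odd s)
    (T : ℕ) (α : Fin T → ℝ)
    (β : Fin T → ℝ)
    (hβ : ∀ n : Fin T, β n =
      (∑ s ∈ S, 2 * w s * Real.cos (α n * s)) / (∑ s ∈ S, 2 * w s))
    (k : ℕ) (hk : 1 ≤ k)
    (A : Matrix (Fin N) (Fin N) ℝ) (hA : A = circAdj N S w)
    (HLP HHP : Matrix (Fin N) (Fin N) ℝ)
    (hHLP : HLP = ((List.finRange T).map (fun n =>
      (1 / 2 ^ k : ℝ) • (β n • (1 : Matrix (Fin N) (Fin N) ℝ)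
        + (∑ s ∈ S, 2 * w s)⁻¹ • A) ^ k)).prod)
    (hHHP : HHP = ((List.finRange T).map (fun n =>
      (1 / 2 ^ k : ℝ) • (β n • (1 : Matrix (Fin N) (Fin N) ℝ)
        - (∑ s ∈ S, 2 * w s)⁻¹ • A) ^ k)).prod)
    (K : Matrix (Fin N) (Fin N) ℝ)
    (hK : K = Matrix.diagonal (fun i : Fin N => if Even (i : ℕ) then (1 : ℝ) else -1))
    (W : Matrix (Fin N) (Fin N) ℝ)
    (hW : W = (1 / 2 : ℝ) • ((1 + K) * HLP) + (1 / 2 : ℝ) • ((1 - K) * HHP))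
    (lam : ℝ → ℝ)
    (hlam : ∀ γ : ℝ, lam γ = (1 / 2) *
      (∏ n : Fin T, (β n + γ) ^ (2 * k) / 2 ^ (2 * k) +
       ∏ n : Fin T, (β n - γ) ^ (2 * k) / 2 ^ (2 * k))) :
    spectrum ℝ (W.transpose * W) =
      lam '' spectrum ℝ ((∑ s ∈ S, 2 * w s)⁻¹ • A) ∧
    ∀ lmin lmax : ℝ,
      IsLeast (lam '' spectrum ℝ ((∑ s ∈ S, 2 * w s)⁻¹ • A)) lmin →
      IsGreatest (lam '' spectrum ℝ ((∑ s ∈ S, 2 * w s)⁻¹ • A)) lmax →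
      0 < lmin →
      ‖Matrix.toEuclideanCLM (𝕜 := ℝ) W‖ * ‖Matrix.toEuclideanCLM (𝕜 := ℝ) W⁻¹‖ =
        Real.sqrt (lmax / lmin) := by
  subst hA hK
  obtain rfl : lam = hgeswtPowerResponse β k := funext hlam
  have hKB := (semiconjBy_downsamplingPattern_circAdj hNe w hodd).smul_right (∑ s ∈ S, 2 * w s)⁻¹
  refine hgeswt_bipartite_condition_number_general β k downsamplingPattern_isHermitian
    downsamplingPattern_mul_self (Matrix.isHermitian_iff_isSymm.2 ((circAdj_isSymm N S w).smul _))
    (by rwa [smul_neg] at hKB) ?_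
  simp only [hW, hHLP, hHHP, filterbank, hgeswtFilter, downsamplingPattern, sub_eq_add_neg]
end
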